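/- Let V be a 3×3 unitary complex matrix. Then Im(V_{11} V_{22} conj(V_{12}) conj(V_{21})) + Im(V_{11} V_{32} conj(V_{12}) conj(V_{31})) = 0 and Im(V_{11} V_{22} conj(V_{12}) conj(V_{21})) + Im(V_{11} V_{23} conj(V_{13}) conj(V_{21})) = 0. Consequently, if for a 3×3 complex matrix V either of these two sums is nonzero, then V is not unitary. -/

import Mathlib

/-!
Summing the quartets `V i α * V k β * star (V i β) * star (V k α)` over all rows `k` leaves a
multiple of the inner product of columns `α` and `β`, hence zero when these are orthogonal. The
term `k = i` is the real number `|V i α|² |V i β|²`, so the remaining terms have real sum. The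
relation for rows is the one for columns applied to the transpose.
-/

open Finset Matrix

/-- The rephasing-invariant quartet of rows `i`, `j` and columns `α`, `β` of a mixing matrix,
whose imaginary part measures CP violation. Conjugation is the `star` of the entries. -/
def quartet {m n R : Type*} [Mul R] [Star R] (V : Matrix m n R) (i j : m) (α β : n) : R :=
  V i α * V j β * star (V i β) * star (V j α)

section Quartet

variable {m n R : Type*}

theorem quartet_transpose [CommSemigroup R] [Star R] (V : Matrix m n R) (i j : m) (α β : n) :
    quartet Vᵀ α β i j = quartet V i j α β :=
  mul_right_comm _ _ _

theorem isSelfAdjoint_quartet_same_row [CommSemigroup R] [StarMul R] (V : Matrix m n R) (i : m)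
    (α β : n) : IsSelfAdjoint (quartet V i i α β) := by
  have hprod : quartet V i i α β = V i α * star (V i α) * (V i β * star (V i β)) := by
    rw [quartet]
    ac_rfl
  rw [hprod]
  exact (IsSelfAdjoint.mul_star_self _).mul (IsSelfAdjoint.mul_star_self _)

theorem sum_quartet_rows [CommSemiring R] [Star R] [Fintype m] (V : Matrix m n R) (i : m)
    (α β : n) : ∑ k, quartet V i k α β = V i α * star (V i β) * (Vᴴ * V) α β := by
  simp only [quartet, mul_apply, conjTranspose_apply, mul_sum]
  exact sum_congr rfl fun k _ => by ring

variable [CommRing R] [StarRing R]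

theorem isSelfAdjoint_sum_erase_quartet_rows [Fintype m] [DecidableEq m] {V : Matrix m n R}
    {α β : n} (horth : (Vᴴ * V) α β = 0) (i : m) :
    IsSelfAdjoint (∑ k ∈ univ.erase i, quartet V i k α β) := by
  have hsum : quartet V i i α β + ∑ k ∈ univ.erase i, quartet V i k α β = 0 := by
    rw [add_sum_erase _ (quartet V i · α β) (mem_univ i), sum_quartet_rows, horth, mul_zero]
  rw [eq_neg_of_add_eq_zero_right hsum]
  exact (isSelfAdjoint_quartet_same_row V i α β).neg

theorem isSelfAdjoint_sum_erase_quartet_cols [Fintype n] [DecidableEq n] {V : Matrix m n R}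
    {i j : m} (horth : (V * Vᴴ) j i = 0) (α : n) :
    IsSelfAdjoint (∑ γ ∈ univ.erase α, quartet V i j α γ) := by
  have horth_transpose : (Vᵀᴴ * Vᵀ) i j = 0 := by
    rwa [conjTranspose_transpose_eq_transpose_conjTranspose, ← transpose_mul, transpose_apply]
  simpa only [quartet_transpose] using isSelfAdjoint_sum_erase_quartet_rows horth_transpose α

theorem conjTranspose_mul_apply_eq_zero_of_mem_unitaryGroup [Fintype n] [DecidableEq n]
    {V : Matrix n n R} (hV : V ∈ unitaryGroup n R) {α β : n} (hne : α ≠ β) :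
    (Vᴴ * V) α β = 0 := by
  rw [← star_eq_conjTranspose, mem_unitaryGroup_iff'.mp hV, one_apply_ne hne]

theorem mul_conjTranspose_apply_eq_zero_of_mem_unitaryGroup [Fintype n] [DecidableEq n]
    {V : Matrix n n R} (hV : V ∈ unitaryGroup n R) {i j : n} (hne : i ≠ j) :
    (V * Vᴴ) i j = 0 := by
  rw [← star_eq_conjTranspose, mem_unitaryGroup_iff.mp hV, one_apply_ne hne]

theorem jarlskog_ckm3_unitarity_test_general [Fintype m] [Fintype n] [DecidableEq m]
    [DecidableEq n] (V : Matrix m n ℂ) (i j : m) (α β : n) :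
    ((Vᴴ * V) α β = 0 → ∑ k ∈ univ.erase i, (quartet V i k α β).im = 0) ∧
      ((V * Vᴴ) j i = 0 → ∑ γ ∈ univ.erase α, (quartet V i j α γ).im = 0) := by
  simp only [← Complex.im_sum, ← Complex.conj_eq_iff_im]
  exact ⟨fun horth => isSelfAdjoint_sum_erase_quartet_rows horth i,
    fun horth => isSelfAdjoint_sum_erase_quartet_cols horth α⟩

end Quartet

/-- **test for a fourth generation.** For a `3 × 3` unitary complex matrix `V`
(1-based indices in the paper correspond to 0-based `Fin 3` indices here):
`Im(V₁₁V₂₂V̄₁₂V̄₂₁) + Im(V₁₁V₃₂V̄₁₂V̄₃₁) = 0` and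
`Im(V₁₁V₂₂V̄₁₂V̄₂₁) + Im(V₁₁V₂₃V̄₁₃V̄₂₁) = 0`; consequently, if either of these sums is
nonzero for a `3 × 3` complex matrix `V`, then `V` is not unitary. -/
theorem jarlskog_ckm3_unitarity_test :
    (∀ V : Matrix (Fin 3) (Fin 3) ℂ, V ∈ Matrix.unitaryGroup (Fin 3) ℂ →
      (V 0 0 * V 1 1 * (starRingEnd ℂ) (V 0 1) * (starRingEnd ℂ) (V 1 0)).im +
        (V 0 0 * V 2 1 * (starRingEnd ℂ) (V 0 1) * (starRingEnd ℂ) (V 2 0)).im = 0 ∧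
      (V 0 0 * V 1 1 * (starRingEnd ℂ) (V 0 1) * (starRingEnd ℂ) (V 1 0)).im +
        (V 0 0 * V 1 2 * (starRingEnd ℂ) (V 0 2) * (starRingEnd ℂ) (V 1 0)).im = 0) ∧
    (∀ V : Matrix (Fin 3) (Fin 3) ℂ,
      ((V 0 0 * V 1 1 * (starRingEnd ℂ) (V 0 1) * (starRingEnd ℂ) (V 1 0)).im +
        (V 0 0 * V 2 1 * (starRingEnd ℂ) (V 0 1) * (starRingEnd ℂ) (V 2 0)).im ≠ 0 ∨
       (V 0 0 * V 1 1 * (starRingEnd ℂ) (V 0 1) * (starRingEnd ℂ) (V 1 0)).im +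
        (V 0 0 * V 1 2 * (starRingEnd ℂ) (V 0 2) * (starRingEnd ℂ) (V 1 0)).im ≠ 0) →
      V ∉ Matrix.unitaryGroup (Fin 3) ℂ) := by
  have vanish (V : Matrix (Fin 3) (Fin 3) ℂ) (hV : V ∈ unitaryGroup (Fin 3) ℂ) :
      (quartet V 0 1 0 1).im + (quartet V 0 2 0 1).im = 0 ∧
        (quartet V 0 1 0 1).im + (quartet V 0 1 0 2).im = 0 := by
    have herase : univ.erase (0 : Fin 3) = {1, 2} := by decide
    simpa [herase] using (jarlskog_ckm3_unitarity_test_general V 0 1 0 1).imp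
      (· (conjTranspose_mul_apply_eq_zero_of_mem_unitaryGroup hV zero_ne_one))
      (· (mul_conjTranspose_apply_eq_zero_of_mem_unitaryGroup hV one_ne_zero))
  exact ⟨vanish, fun V hne hV => hne.elim (· (vanish V hV).1) (· (vanish V hV).2)⟩
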